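/- In a triconnected 4-planar graph, every pair of distinct separating triangles T and T' is vertex-disjoint, i.e., V(T) ∩ V(T') = ∅. -/

import Mathlib

open Set

universe u

/-- A topological embedding of a simple graph in the plane: vertices are mapped to
distinct points and every edge is realized by a simple arc joining the images of its
endpoints, such that two arcs of distinct edges meet only in common endpoints and no
vertex point lies in the interior of an arc. -/
structure PlaneEmbedding {V : Type u} (G : SimpleGraph V) where
  pos : V → ℝ × ℝ
  pos_inj : Function.Injective pos
  arc : ∀ ⦃u v : V⦄, G.Adj u v → Set (ℝ × ℝ)
  arc_symm : ∀ ⦃u v : V⦄ (h : G.Adj u v), arc h.symm = arc h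
  arc_curve : ∀ ⦃u v : V⦄ (h : G.Adj u v), ∃ f : ℝ → ℝ × ℝ,
    ContinuousOn f (Set.Icc 0 1) ∧ Set.InjOn f (Set.Icc 0 1) ∧
    f 0 = pos u ∧ f 1 = pos v ∧ f '' Set.Icc 0 1 = arc h
  arc_inter : ∀ ⦃u v w z : V⦄ (h₁ : G.Adj u v) (h₂ : G.Adj w z),
    s(u, v) ≠ s(w, z) → arc h₁ ∩ arc h₂ ⊆ ({pos u, pos v} ∩ {pos w, pos z} : Set (ℝ × ℝ))
  pos_arc : ∀ ⦃u v : V⦄ (h : G.Adj u v) (w : V), pos w ∈ arc h → w = u ∨ w = v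

/-- A graph is planar if it admits a topological embedding in the plane. -/
def SimpleGraph.IsPlanar {V : Type u} (G : SimpleGraph V) : Prop :=
  Nonempty (PlaneEmbedding G)

/-- The point set covered by a plane embedding. -/
def PlaneEmbedding.drawing {V : Type u} {G : SimpleGraph V} (E : PlaneEmbedding G) :
    Set (ℝ × ℝ) :=
  Set.range E.pos ∪ ⋃ (u : V) (v : V) (h : G.Adj u v), E.arc h

/-- A face of a plane embedding is a connected component of the complement of the drawing. -/
def PlaneEmbedding.IsFace {V : Type u} {G : SimpleGraph V} (E : PlaneEmbedding G)
    (F : Set (ℝ × ℝ)) : Prop :=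
  ∃ p, p ∉ E.drawing ∧ F = connectedComponentIn E.drawingᶜ p

/-- A vertex is incident to a face if its point lies on the boundary of the face. -/
def PlaneEmbedding.VertexOnFace {V : Type u} {G : SimpleGraph V} (E : PlaneEmbedding G)
    (v : V) (F : Set (ℝ × ℝ)) : Prop :=
  E.pos v ∈ closure F

/-- Maximum degree at most `d`. -/
def SimpleGraph.MaxDegreeLE {V : Type u} (G : SimpleGraph V) (d : ℕ) : Prop :=
  ∀ v : V, (G.neighborSet v).ncard ≤ d

/-- A graph is triconnected (3-connected) if it has more than three vertices, is
connected, and stays connected after removing any two vertices. -/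
def SimpleGraph.IsTriconnected {V : Type u} (G : SimpleGraph V) : Prop :=
  3 < Nat.card V ∧ G.Connected ∧
    ∀ u v : V, (G.induce {w : V | w ≠ u ∧ w ≠ v}).Connected

/-- A graph is biconnected (2-connected) if it has more than two vertices, is
connected, and stays connected after removing any single vertex. -/
def SimpleGraph.IsBiconnected {V : Type u} (G : SimpleGraph V) : Prop :=
  2 < Nat.card V ∧ G.Connected ∧ ∀ u : V, (G.induce {w : V | w ≠ u}).Connected

/-- A graph is subhamiltonian if it is a spanning subgraph of a planar hamiltonian graph. -/
def SimpleGraph.IsSubhamiltonian {V : Type u} [Fintype V] (G : SimpleGraph V) : Prop :=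
  ∃ H : SimpleGraph V, G ≤ H ∧ H.IsPlanar ∧ (letI := Classical.decEq V; H.IsHamiltonian)

/-- The graph consisting of the edges of the cyclic vertex sequence `σ`. -/
def cyclicSuccGraph {W : Type u} (σ : ZMod (Nat.card W) ≃ W) : SimpleGraph W :=
  SimpleGraph.fromRel fun u v => ∃ i, u = σ i ∧ v = σ (i + 1)

/-- The cyclic ordering `σ` of all vertices of `G` is a subhamiltonian cycle for `G` if
adding the edges between consecutive vertices of `σ` keeps the graph planar. -/
def SimpleGraph.IsSubhamiltonianCycle {W : Type u} (G : SimpleGraph W)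
    (σ : ZMod (Nat.card W) ≃ W) : Prop :=
  SimpleGraph.IsPlanar (G ⊔ cyclicSuccGraph σ)

/-- The edges (pairs of consecutive vertices) of the cyclic sequence `σ`. -/
def cycleEdges {W : Type u} (σ : ZMod (Nat.card W) ≃ W) : Set (Sym2 W) :=
  {e | ∃ i, e = s(σ i, σ (i + 1))}

/-- The subhamiltonian cycle `σ` crosses the face `F` at position `i` if the two
consecutive vertices `σ i` and `σ (i+1)` are both incident to `F` but not adjacent. -/
def CrossesFaceAt {V : Type u} {G : SimpleGraph V} (E : PlaneEmbedding G)
    (σ : ZMod (Nat.card V) ≃ V) (F : Set (ℝ × ℝ)) (i : ZMod (Nat.card V)) : Prop :=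
  E.VertexOnFace (σ i) F ∧ E.VertexOnFace (σ (i + 1)) F ∧ ¬ G.Adj (σ i) (σ (i + 1))

/-- A separating triangle: a triangle whose removal disconnects the graph. -/
def SimpleGraph.IsSepTriangle {V : Type u} (G : SimpleGraph V) (a b c : V) : Prop :=
  G.Adj a b ∧ G.Adj b c ∧ G.Adj a c ∧
    ¬ (G.induce {v : V | v ≠ a ∧ v ≠ b ∧ v ≠ c}).Connected

section Triangle

variable {V : Type u} {G : SimpleGraph V} (E : PlaneEmbedding G) {a b c : V}

/-- The Jordan curve formed by the drawing of the triangle `a b c`. -/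
def triangleDrawing (hab : G.Adj a b) (hbc : G.Adj b c) (hac : G.Adj a c) :
    Set (ℝ × ℝ) :=
  E.arc hab ∪ E.arc hbc ∪ E.arc hac

/-- The vertices strictly inside the triangle `a b c` (bounded side of the Jordan curve). -/
def insideTriangle (hab : G.Adj a b) (hbc : G.Adj b c) (hac : G.Adj a c) : Set V :=
  {v | v ≠ a ∧ v ≠ b ∧ v ≠ c ∧
    Bornology.IsBounded
      (connectedComponentIn (triangleDrawing E hab hbc hac)ᶜ (E.pos v))}

/-- The vertices strictly outside the triangle `a b c` (unbounded side of the Jordan curve). -/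
def outsideTriangle (hab : G.Adj a b) (hbc : G.Adj b c) (hac : G.Adj a c) : Set V :=
  {v | v ≠ a ∧ v ≠ b ∧ v ≠ c ∧
    ¬ Bornology.IsBounded
      (connectedComponentIn (triangleDrawing E hab hbc hac)ᶜ (E.pos v))}

end Triangle

theorem cut_edge {V : Type u} {G : SimpleGraph V} (h3 : G.IsTriconnected) (u v : V) (S : Set V)
    (hu : u ∉ S) (hv : v ∉ S) (hS : S.Nonempty) (hw : ∃ w, w ∉ S ∧ w ≠ u ∧ w ≠ v) :
    ∃ s t, s ∈ S ∧ t ∉ S ∧ t ≠ u ∧ t ≠ v ∧ G.Adj s t := by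
  by_contra hcon
  push Not at hcon
  obtain ⟨s, hs⟩ := hS
  obtain ⟨w, hwS, hwu, hwv⟩ := hw
  have hc := (h3.2.2 u v).preconnected
    ⟨s, by rintro rfl; exact hu hs, by rintro rfl; exact hv hs⟩ ⟨w, hwu, hwv⟩
  obtain ⟨p⟩ := hc
  have key : ∀ (x y : {w : V | w ≠ u ∧ w ≠ v})
      (p : (G.induce {w : V | w ≠ u ∧ w ≠ v}).Walk x y), x.1 ∈ S → y.1 ∈ S := by
    intro x y p
    induction p with
    | nil => exact id
    | @cons x y z h p ih =>
      intro hx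
      apply ih
      by_contra hy
      exact hcon x.1 y.1 hx hy y.2.1 y.2.2 h
  exact hwS (key _ _ p hs)

structure SepT {V : Type u} (G : SimpleGraph V) (a b c : V) (C D : Set V) : Prop where
  ab : G.Adj a b
  bc : G.Adj b c
  ac : G.Adj a c
  neC : C.Nonempty
  neD : D.Nonempty
  cover : ∀ v, v = a ∨ v = b ∨ v = c ∨ v ∈ C ∨ v ∈ D
  aC : a ∉ C
  bC : b ∉ C
  cC : c ∉ C
  aD : a ∉ D
  bD : b ∉ D
  cD : c ∉ D
  disj : ∀ v, v ∈ C → v ∉ D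
  noadj : ∀ x y, x ∈ C → y ∈ D → ¬ G.Adj x y

theorem SepT.swap {V : Type u} {G : SimpleGraph V} {a b c : V} {C D : Set V}
    (h : SepT G a b c C D) : SepT G a b c D C :=
  ⟨h.ab, h.bc, h.ac, h.neD, h.neC, fun v => by have := h.cover v; tauto, h.aD, h.bD, h.cD,
    h.aC, h.bC, h.cC, fun v hv hv' => h.disj v hv' hv,
    fun x y hx hy ha => h.noadj y x hy hx ha.symm⟩

theorem SepT.rot {V : Type u} {G : SimpleGraph V} {a b c : V} {C D : Set V}
    (h : SepT G a b c C D) : SepT G b c a C D :=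
  ⟨h.bc, h.ac.symm, h.ab.symm, h.neC, h.neD, fun v => by have := h.cover v; tauto,
    h.bC, h.cC, h.aC, h.bD, h.cD, h.aD, h.disj, h.noadj⟩

theorem SepT.of {V : Type u} {G : SimpleGraph V} (h3 : G.IsTriconnected) {a b c : V}
    (h : G.IsSepTriangle a b c) : ∃ C D, SepT G a b c C D := by
  obtain ⟨ab, bc, ac, hn⟩ := h
  have hex : ∃ w, w ≠ a ∧ w ≠ b ∧ w ≠ c := by
    by_contra hcon
    push Not at hcon
    have h1 : (Set.univ : Set V) ⊆ {a, b, c} := by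
      intro w _
      have := hcon w
      simp only [Set.mem_insert_iff, Set.mem_singleton_iff]
      tauto
    have h2 := Set.ncard_le_ncard h1 (by simp)
    have h4 : ({a, b, c} : Set V).ncard ≤ 3 := by
      have e1 := Set.ncard_insert_le a {b, c}
      have e2 := Set.ncard_insert_le b {c}
      rw [Set.ncard_singleton] at e2
      omega
    rw [Set.ncard_univ] at h2
    have := h3.1
    omega
  obtain ⟨w, hw⟩ := hex
  have hnp : ¬ (G.induce {v : V | v ≠ a ∧ v ≠ b ∧ v ≠ c}).Preconnected := by
    intro hp
    haveI : Nonempty {v : V | v ≠ a ∧ v ≠ b ∧ v ≠ c} := ⟨⟨w, hw⟩⟩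
    exact hn ⟨hp⟩
  unfold SimpleGraph.Preconnected at hnp
  push Not at hnp
  obtain ⟨x, y, hxy⟩ := hnp
  refine ⟨{v | ∃ h : v ≠ a ∧ v ≠ b ∧ v ≠ c,
      (G.induce {v : V | v ≠ a ∧ v ≠ b ∧ v ≠ c}).Reachable x ⟨v, h⟩},
    {v | ∃ h : v ≠ a ∧ v ≠ b ∧ v ≠ c,
      ¬ (G.induce {v : V | v ≠ a ∧ v ≠ b ∧ v ≠ c}).Reachable x ⟨v, h⟩},
    ab, bc, ac, ⟨x.1, x.2, SimpleGraph.Reachable.refl _⟩, ⟨y.1, y.2, hxy⟩, ?_, ?_, ?_, ?_, ?_,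
    ?_, ?_, ?_, ?_⟩
  · intro v
    by_cases hv : v ≠ a ∧ v ≠ b ∧ v ≠ c
    · by_cases hr : (G.induce {v : V | v ≠ a ∧ v ≠ b ∧ v ≠ c}).Reachable x ⟨v, hv⟩
      · exact Or.inr (Or.inr (Or.inr (Or.inl ⟨hv, hr⟩)))
      · exact Or.inr (Or.inr (Or.inr (Or.inr ⟨hv, hr⟩)))
    · tauto
  · rintro ⟨h, -⟩; exact h.1 rfl
  · rintro ⟨h, -⟩; exact h.2.1 rfl
  · rintro ⟨h, -⟩; exact h.2.2 rfl
  · rintro ⟨h, -⟩; exact h.1 rfl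
  · rintro ⟨h, -⟩; exact h.2.1 rfl
  · rintro ⟨h, -⟩; exact h.2.2 rfl
  · rintro v ⟨h, hr⟩ ⟨h', hr'⟩; exact hr' hr
  · rintro p q ⟨h, hr⟩ ⟨h', hr'⟩ hadj
    apply hr'
    refine hr.trans (SimpleGraph.Adj.reachable ?_)
    exact hadj

theorem SepT.nbrC {V : Type u} {G : SimpleGraph V} (h3 : G.IsTriconnected) {a b c : V}
    {C D : Set V} (h : SepT G a b c C D) : ∃ x ∈ C, G.Adj a x := by
  obtain ⟨s, t, hs, ht, htb, htc, hadj⟩ := cut_edge h3 b c C h.bC h.cC h.neC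
    ⟨a, h.aC, h.ab.ne, h.ac.ne⟩
  rcases h.cover t with rfl | rfl | rfl | h1 | h1
  · exact ⟨s, hs, hadj.symm⟩
  · exact absurd rfl htb
  · exact absurd rfl htc
  · exact absurd h1 ht
  · exact absurd hadj (h.noadj _ _ hs h1)

theorem SepT.nbrs {V : Type u} {G : SimpleGraph V} (h3 : G.IsTriconnected)
    (hdeg : G.MaxDegreeLE 4) {a b c : V} {C D : Set V} (h : SepT G a b c C D) :
    ∃ x ∈ C, ∃ y ∈ D, G.Adj a x ∧ G.Adj a y ∧
      ∀ z, G.Adj a z → z = b ∨ z = c ∨ z = x ∨ z = y := by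
  obtain ⟨x, hx, hax⟩ := h.nbrC h3
  obtain ⟨y, hy, hay⟩ := h.swap.nbrC h3
  refine ⟨x, hx, y, hy, hax, hay, ?_⟩
  intro z hz
  by_contra hcon
  push Not at hcon
  haveI : Finite V := Nat.finite_of_card_ne_zero (by have := h3.1; omega)
  have hsub : ({z, b, c, x, y} : Set V) ⊆ G.neighborSet a := by
    intro w hw
    simp only [Set.mem_insert_iff, Set.mem_singleton_iff] at hw
    rcases hw with rfl | rfl | rfl | rfl | rfl
    · exact hz
    · exact h.ab
    · exact h.ac
    · exact hax
    · exact hay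
  have h1 := Set.ncard_le_ncard hsub (Set.toFinite _)
  have h2 := hdeg a
  have hbc := h.bc.ne
  have hbx : b ≠ x := by rintro rfl; exact h.bC hx
  have hcx : c ≠ x := by rintro rfl; exact h.cC hx
  have hby : b ≠ y := by rintro rfl; exact h.bD hy
  have hcy : c ≠ y := by rintro rfl; exact h.cD hy
  have hxy : x ≠ y := by rintro rfl; exact h.disj _ hx hy
  have h5 : ({z, b, c, x, y} : Set V).ncard = 5 := by
    rw [Set.ncard_insert_of_notMem (by simp; tauto) (Set.toFinite _),
      Set.ncard_insert_of_notMem (by simp; tauto) (Set.toFinite _),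
      Set.ncard_insert_of_notMem (by simp; tauto) (Set.toFinite _),
      Set.ncard_pair hxy]
  omega

theorem two_C {V : Type u} {G : SimpleGraph V} (h3 : G.IsTriconnected)
    (hdeg : G.MaxDegreeLE 4) {a b c d : V} {C D C' D' : Set V} (h : SepT G a b c C D)
    (h' : SepT G a b d C' D') (hd : d ∈ C) : False := by
  obtain ⟨x, hx, y, hy, -, -, hz⟩ := h.nbrs h3 hdeg
  obtain ⟨x2, hx2, y2, hy2, -, -, hz2⟩ := h.rot.nbrs h3 hdeg
  have ua : ∀ w ∈ C, G.Adj a w → w = d := by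
    have : ∀ w ∈ C, G.Adj a w → w = x := by
      intro w hw haw
      rcases hz w haw with rfl | rfl | rfl | rfl
      · exact absurd hw h.bC
      · exact absurd hw h.cC
      · rfl
      · exact absurd hy (h.disj _ hw)
    intro w hw haw
    rw [this w hw haw, this d hd h'.ac]
  have ub : ∀ w ∈ C, G.Adj b w → w = d := by
    have : ∀ w ∈ C, G.Adj b w → w = x2 := by
      intro w hw haw
      rcases hz2 w haw with rfl | rfl | rfl | rfl
      · exact absurd hw h.cC
      · exact absurd hw h.aC
      · rfl
      · exact absurd hy2 (h.disj _ hw)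
    intro w hw haw
    rw [this w hw haw, this d hd h'.bc]
  have hC : ∀ z ∈ C, z = d := by
    intro z hzC
    by_contra hzd
    obtain ⟨s, t, hs, ht, htd, htc, hadj⟩ := cut_edge h3 d c (C \ {d}) (by simp)
      (fun hc => h.cC hc.1) ⟨z, hzC, hzd⟩
      ⟨a, fun ha => h.aC ha.1, h'.ac.ne, h.ac.ne⟩
    rcases h.cover t with rfl | rfl | rfl | h1 | h1
    · exact hs.2 (ua s hs.1 hadj.symm)
    · exact hs.2 (ub s hs.1 hadj.symm)
    · exact htc rfl
    · exact ht ⟨h1, htd⟩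
    · exact h.noadj _ _ hs.1 h1 hadj
  have hn : ∀ w, G.Adj d w → w = a ∨ w = b ∨ w = c := by
    intro w hw
    rcases h.cover w with h1 | h1 | h1 | h1 | h1
    · exact Or.inl h1
    · exact Or.inr (Or.inl h1)
    · exact Or.inr (Or.inr h1)
    · exact absurd (hC w h1) hw.ne'
    · exact absurd hw (h.noadj _ _ hd h1)
  obtain ⟨p, hp, hdp⟩ := h'.rot.rot.nbrC h3
  obtain ⟨q, hq, hdq⟩ := h'.rot.rot.swap.nbrC h3
  have hpc : p = c := by
    rcases hn p hdp with rfl | rfl | h1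
    · exact absurd hp h'.aC
    · exact absurd hp h'.bC
    · exact h1
  have hqc : q = c := by
    rcases hn q hdq with rfl | rfl | h1
    · exact absurd hq h'.aD
    · exact absurd hq h'.bD
    · exact h1
  subst hpc
  subst hqc
  exact h'.disj _ hp hq

theorem IsSep_rot {V : Type u} {G : SimpleGraph V} {a b c : V} (h : G.IsSepTriangle a b c) :
    G.IsSepTriangle b c a := by
  obtain ⟨ab, bc, ac, hn⟩ := h
  refine ⟨bc, ac.symm, ab.symm, ?_⟩
  have : {v : V | v ≠ b ∧ v ≠ c ∧ v ≠ a} = {v : V | v ≠ a ∧ v ≠ b ∧ v ≠ c} := by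
    ext v; simp only [Set.mem_setOf_eq]; tauto
  rw [this]; exact hn

theorem IsSep_flip {V : Type u} {G : SimpleGraph V} {a b c : V} (h : G.IsSepTriangle a b c) :
    G.IsSepTriangle a c b := by
  obtain ⟨ab, bc, ac, hn⟩ := h
  refine ⟨ac, bc.symm, ab, ?_⟩
  have : {v : V | v ≠ a ∧ v ≠ c ∧ v ≠ b} = {v : V | v ≠ a ∧ v ≠ b ∧ v ≠ c} := by
    ext v; simp only [Set.mem_setOf_eq]; tauto
  rw [this]; exact hn

theorem two_eq {V : Type u} {G : SimpleGraph V} (h3 : G.IsTriconnected)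
    (hdeg : G.MaxDegreeLE 4) {a b c d : V} (hT : G.IsSepTriangle a b c)
    (hT' : G.IsSepTriangle a b d) : d = c := by
  obtain ⟨C, D, h⟩ := SepT.of h3 hT
  obtain ⟨C', D', h'⟩ := SepT.of h3 hT'
  rcases h.cover d with h1 | h1 | h1 | h1 | h1
  · exact absurd h1 h'.ac.ne'
  · exact absurd h1 h'.bc.ne'
  · exact h1
  · exact (two_C h3 hdeg h h' h1).elim
  · exact (two_C h3 hdeg h.swap h' h1).elim

theorem one_eq {V : Type u} {G : SimpleGraph V} (h3 : G.IsTriconnected)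
    (hdeg : G.MaxDegreeLE 4) {a b c p q : V} (hT : G.IsSepTriangle a b c)
    (hT' : G.IsSepTriangle a p q) : ({a, b, c} : Set V) = {a, p, q} := by
  have hpq : ∀ p q, G.IsSepTriangle a p q → p = b ∨ p = c →
      ({a, b, c} : Set V) = {a, p, q} := by
    rintro p q h (rfl | rfl)
    · rw [two_eq h3 hdeg hT h]
    · rw [two_eq h3 hdeg (IsSep_flip hT) h, Set.pair_comm]
  obtain ⟨C, D, h⟩ := SepT.of h3 hT
  obtain ⟨x, hx, y, hy, -, -, hz⟩ := h.nbrs h3 hdeg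
  have hflip : q = b ∨ q = c → ({a, b, c} : Set V) = {a, p, q} := by
    intro hq
    rw [hpq q p (IsSep_flip hT') hq, Set.pair_comm]
  have hadj := hT'.2.1
  rcases hz p hT'.1 with h1 | h1 | h1 | h1
  · exact hpq p q hT' (Or.inl h1)
  · exact hpq p q hT' (Or.inr h1)
  all_goals
    rcases hz q hT'.2.2.1 with h2 | h2 | h2 | h2
    · exact hflip (Or.inl h2)
    · exact hflip (Or.inr h2)
    all_goals subst h1 h2
  · exact absurd hadj (G.loopless.irrefl _)
  · exact absurd hadj (h.noadj _ _ hx hy)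
  · exact absurd hadj.symm (h.noadj _ _ hx hy)
  · exact absurd hadj (G.loopless.irrefl _)

/-- In a triconnected 4-planar graph, distinct separating triangles are
vertex disjoint. -/
theorem separating_triangles_vertex_disjoint {V : Type u} (G : SimpleGraph V)
    (h3 : G.IsTriconnected) (hplanar : G.IsPlanar) (hdeg : G.MaxDegreeLE 4)
    {a b c a' b' c' : V} (hT : G.IsSepTriangle a b c) (hT' : G.IsSepTriangle a' b' c')
    (hne : ({a, b, c} : Set V) ≠ ({a', b', c'} : Set V)) :
    ({a, b, c} : Set V) ∩ ({a', b', c'} : Set V) = ∅ := by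
  have rot : ∀ x y z : V, ({x, y, z} : Set V) = {y, z, x} := by
    intro x y z; ext v; simp only [Set.mem_insert_iff, Set.mem_singleton_iff]; tauto
  have norm_form : ∀ v x y z : V, G.IsSepTriangle x y z → v ∈ ({x, y, z} : Set V) →
      ∃ p q, G.IsSepTriangle v p q ∧ ({x, y, z} : Set V) = {v, p, q} := by
    intro v x y z h hv
    simp only [Set.mem_insert_iff, Set.mem_singleton_iff] at hv
    rcases hv with rfl | rfl | rfl
    · exact ⟨_, _, h, rfl⟩
    · exact ⟨_, _, IsSep_rot h, rot _ _ _⟩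
    · exact ⟨_, _, IsSep_rot (IsSep_rot h), (rot _ _ _).trans (rot _ _ _)⟩
  rw [Set.eq_empty_iff_forall_notMem]
  rintro v ⟨hv, hv'⟩
  obtain ⟨p, q, h1, e1⟩ := norm_form v a b c hT hv
  obtain ⟨r, s, h2, e2⟩ := norm_form v a' b' c' hT' hv'
  exact hne (by rw [e1, e2]; exact one_eq h3 hdeg h1 h2)
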